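/- Let A ∈ ℂ^{n×n} be sectorial. Then prank(A) ≥ min{ rank(A − M) : M ∈ ℂ^{n×n} Hermitian positive definite }, and moreover min{ rank(A − M) : M Hermitian positive definite } = min{ rank(TᴴAT − I) : T ∈ ℂ^{n×n} invertible }. -/

import Mathlib

noncomputable section

open Matrix
open scoped Classical ComplexOrder

namespace LowPrank

variable {n : ℕ}

/-- A matrix is sectorial if its numerical range does not contain `0`
(`star x ⬝ᵥ x = 1` encodes `‖x‖₂ = 1`). -/
def IsSectorial (A : Matrix (Fin n) (Fin n) ℂ) : Prop :=
  ∀ x : Fin n → ℂ, star x ⬝ᵥ x = 1 → star x ⬝ᵥ A.mulVec x ≠ 0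

/-- The diagonal unitary matrix `diag (e^{iφ₁}, …, e^{iφₙ})`. -/
def phaseDiag (φ : Fin n → ℝ) : Matrix (Fin n) (Fin n) ℂ :=
  Matrix.diagonal fun k => Complex.exp (Complex.I * (φ k : ℂ))

/-- `A = Tᴴ diag (e^{iφ₁}, …, e^{iφₙ}) T` with `T` invertible. -/
def IsSectorialDecomp (A T : Matrix (Fin n) (Fin n) ℂ) (φ : Fin n → ℝ) : Prop :=
  IsUnit T ∧ A = Tᴴ * phaseDiag φ * T

/-- `φ` is the (sorted, normalized) vector of canonical phases of `A`:
nonincreasing, spread `< π`, midpoint of the range in `(-π, π]`, and realizing a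
sectorial decomposition of `A`. -/
def IsCanonicalPhases (A : Matrix (Fin n) (Fin n) ℂ) (φ : Fin n → ℝ) : Prop :=
  Antitone φ ∧ (∀ i j, φ i - φ j < Real.pi) ∧
    (-Real.pi < ((⨆ i, φ i) + ⨅ i, φ i) / 2) ∧ (((⨆ i, φ i) + ⨅ i, φ i) / 2 ≤ Real.pi) ∧
    ∃ T, IsSectorialDecomp A T φ

/-- The canonical phases `φ₁(A) ≥ ⋯ ≥ φₙ(A)` of a sectorial matrix
(`phases A k` is the `(k+1)`-st largest canonical phase). -/
noncomputable def phases (A : Matrix (Fin n) (Fin n) ℂ) : Fin n → ℝ :=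
  if h : ∃ φ, IsCanonicalPhases A φ then h.choose else 0

/-- The phase-rank: the number of nonzero canonical phases. -/
noncomputable def prank (A : Matrix (Fin n) (Fin n) ℂ) : ℕ :=
  {k : Fin n | phases A k ≠ 0}.ncard

/-- Positive-imaginary: sectorial with all canonical phases in `[0, π)`. -/
def PositiveImaginary (A : Matrix (Fin n) (Fin n) ℂ) : Prop :=
  IsSectorial A ∧ ∀ k, phases A k ∈ Set.Ico 0 Real.pi

/-- Symmetric gauge function. -/
structure IsSymmetricGauge (Φ : (Fin n → ℝ) → ℝ) : Prop where
  pos : ∀ x, x ≠ 0 → 0 < Φ x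
  smul : ∀ (ρ : ℝ) (x), Φ (ρ • x) = |ρ| * Φ x
  subadd : ∀ x y, Φ (x + y) ≤ Φ x + Φ y
  perm : ∀ (σ : Equiv.Perm (Fin n)) (x), Φ (x ∘ σ) = Φ x
  abs : ∀ x, Φ (fun k => |x k|) = Φ x

/-- The set `S_p(A, r)` of `r`-half-truncations of `A`. -/
def Sp (A : Matrix (Fin n) (Fin n) ℂ) (r : ℕ) : Set (Matrix (Fin n) (Fin n) ℂ) :=
  {E | ∃ T, IsSectorialDecomp A T (phases A) ∧
    E = Tᴴ * Matrix.diagonal (fun k : Fin n =>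
      if (k : ℕ) < r then Complex.exp (Complex.I * ((phases A k / 2 : ℝ) : ℂ)) else 1) * T}


/-- Some unit complex number rotates `ζ` onto the real axis. -/
lemma exists_unit_im_zero (ζ : ℂ) : ∃ u : ℂ, star u * u = 1 ∧ (u * ζ).im = 0 := by
  by_cases h : ζ = 0
  · exact ⟨1, by simp, by simp [h]⟩
  · have hn : (‖ζ‖ : ℂ) ≠ 0 := by simpa using h
    have hz : (starRingEnd ℂ) ζ * ζ = (‖ζ‖ : ℂ) ^ 2 := Complex.conj_mul' ζ
    refine ⟨(starRingEnd ℂ) ζ / ‖ζ‖, ?_, ?_⟩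
    · have : star ((starRingEnd ℂ) ζ / (‖ζ‖ : ℂ)) = ζ / ‖ζ‖ := by simp
      rw [this]
      field_simp
      rw [mul_comm, hz]
    · have : (starRingEnd ℂ) ζ / ‖ζ‖ * ζ = (‖ζ‖ : ℂ) := by
        rw [div_mul_eq_mul_div, hz]; field_simp
      rw [this]; simp

lemma quad_expand (B : Matrix (Fin n) (Fin n) ℂ) (x y : Fin n → ℂ) (a b : ℂ) :
    star (a • x + b • y) ⬝ᵥ B.mulVec (a • x + b • y) =
      star a * a * (star x ⬝ᵥ B.mulVec x) + star b * b * (star y ⬝ᵥ B.mulVec y)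
      + (star a * b * (star x ⬝ᵥ B.mulVec y) + star b * a * (star y ⬝ᵥ B.mulVec x)) := by
  simp only [star_add, star_smul, mulVec_add, mulVec_smul, add_dotProduct, dotProduct_add,
    smul_dotProduct, dotProduct_smul, smul_eq_mul]
  ring

lemma exists_isotropic (B : Matrix (Fin n) (Fin n) ℂ) (x y : Fin n → ℂ) (z : ℂ) (hx0 : x ≠ 0)
    (hx : star x ⬝ᵥ B.mulVec x = z) (hy : star y ⬝ᵥ B.mulVec y = -z) :
    ∃ w : Fin n → ℂ, w ≠ 0 ∧ star w ⬝ᵥ B.mulVec w = 0 := by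
  by_cases hz : z = 0
  · exact ⟨x, hx0, by rw [hx, hz]⟩
  set p := star x ⬝ᵥ B.mulVec y with hp
  set q := star y ⬝ᵥ B.mulVec x with hq
  obtain ⟨u, hu, him⟩ := exists_unit_im_zero (p * star z - star q * z)
  set c := u * p + star u * q with hc
  have hcim : (c * star z).im = 0 := by
    rw [← him, hc]
    simp
    ring
  have hcz : ∃ κ : ℝ, c = κ * z := by
    refine ⟨(c * star z).re / Complex.normSq z, ?_⟩
    have h1 : c * star z = ((c * star z).re : ℂ) := by
      apply Complex.ext <;> simp [hcim]
      simpa using hcim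
    have h2 : star z * z = (Complex.normSq z : ℂ) := by
      rw [Complex.normSq_eq_conj_mul_self]; rfl
    have h3 : (Complex.normSq z : ℂ) ≠ 0 := by simpa using hz
    rw [Complex.ofReal_div, ← h1, ← h2]
    rw [← h2] at h3
    rw [div_mul_eq_mul_div, mul_assoc, mul_div_assoc, div_self h3, mul_one]
  obtain ⟨κ, hκ⟩ := hcz
  set s : ℝ := (-κ + √(κ ^ 2 + 4)) / 2 with hs
  have hs2 : s ^ 2 + κ * s - 1 = 0 := by
    have : √(κ ^ 2 + 4) ^ 2 = κ ^ 2 + 4 := Real.sq_sqrt (by positivity)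
    rw [hs]; nlinarith
  have hs2' : (s : ℂ) ^ 2 + κ * s - 1 = 0 := by exact_mod_cast hs2
  have hss : star (s : ℂ) = s := by simp
  refine ⟨(s : ℂ) • x + u • y, ?_, ?_⟩
  · intro h0
    have h1 : (s : ℂ) • x = (-u) • y := by
      rw [neg_smul]; exact eq_neg_of_add_eq_zero_left h0
    have h2 := congrArg (fun v => star v ⬝ᵥ B.mulVec v) h1
    simp only [star_smul, mulVec_smul, smul_dotProduct, dotProduct_smul, smul_eq_mul, hx, hy,
      hss, star_neg] at h2
    have h3 : ((s : ℂ) ^ 2 + 1) * z = 0 := by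
      linear_combination h2 - z * hu
    rcases mul_eq_zero.1 h3 with h4 | h4
    · have : s ^ 2 + 1 = 0 := by exact_mod_cast h4
      nlinarith [sq_nonneg s]
    · exact hz h4
  · rw [quad_expand, hx, hy, hss, ← hp, ← hq]
    linear_combination z * hs2' - z * hu + (s : ℂ) * hκ

lemma star_self_pos {x : Fin n → ℂ} (hx : x ≠ 0) : ∃ r : ℝ, 0 < r ∧ star x ⬝ᵥ x = (r : ℂ) := by
  have h : 0 < star x ⬝ᵥ x := dotProduct_star_self_pos_iff.2 hx
  rw [Complex.lt_def] at h
  refine ⟨(star x ⬝ᵥ x).re, by simpa using h.1, ?_⟩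
  apply Complex.ext
  · simp
  · simpa using h.2.symm

lemma exists_normalize {x : Fin n → ℂ} (hx : x ≠ 0) :
    ∃ r : ℝ, 0 < r ∧ star ((r : ℂ) • x) ⬝ᵥ ((r : ℂ) • x) = 1 := by
  obtain ⟨t, ht, h⟩ := star_self_pos hx
  refine ⟨(√t)⁻¹, by positivity, ?_⟩
  simp only [star_smul, smul_dotProduct, dotProduct_smul, smul_eq_mul, h]
  have : ((√t : ℝ) : ℂ) ^ 2 = t := by rw [← Complex.ofReal_pow, Real.sq_sqrt ht.le]
  have h0 : ((√t : ℝ) : ℂ) ≠ 0 := by simpa using (Real.sqrt_pos.2 ht).ne'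
  simp
  field_simp
  exact this.symm

/-- The numerical range. -/
def numRange (A : Matrix (Fin n) (Fin n) ℂ) : Set ℂ :=
  (fun x : Fin n → ℂ => star x ⬝ᵥ A.mulVec x) '' {x | star x ⬝ᵥ x = 1}

/-- Toeplitz–Hausdorff. -/
lemma numRange_convex (A : Matrix (Fin n) (Fin n) ℂ) : Convex ℝ (numRange A) := by
  rintro _ ⟨x, hx, rfl⟩ _ ⟨y, hy, rfl⟩ a b ha hb hab
  simp only [Set.mem_setOf_eq] at hx hy
  rcases ha.eq_or_lt with rfl | ha
  · have : b = 1 := by linarith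
    subst this
    exact ⟨y, hy, by simp⟩
  set z1 := star x ⬝ᵥ A.mulVec x with hz1
  set z2 := star y ⬝ᵥ A.mulVec y with hz2
  set p : ℂ := a • z1 + b • z2 with hp
  have hp' : p = a * z1 + b * z2 := by simp [hp]
  have key : ∀ v : Fin n → ℂ, star v ⬝ᵥ (A - p • 1).mulVec v
      = star v ⬝ᵥ A.mulVec v - p * (star v ⬝ᵥ v) := by
    intro v
    simp [sub_mulVec, smul_mulVec]
  have hsa : ((√a : ℝ) : ℂ) * ((√a : ℝ) : ℂ) = a := by
    rw [← Complex.ofReal_mul, Real.mul_self_sqrt ha.le]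
  have hsb : ((√b : ℝ) : ℂ) * ((√b : ℝ) : ℂ) = b := by
    rw [← Complex.ofReal_mul, Real.mul_self_sqrt hb]
  have hab' : (a : ℂ) + b = 1 := by exact_mod_cast hab
  have hx0 : x ≠ 0 := by rintro rfl; simp at hx
  have hsc : ∀ (t : ℝ) (v : Fin n → ℂ) (B : Matrix (Fin n) (Fin n) ℂ),
      star ((t : ℂ) • v) ⬝ᵥ B.mulVec ((t : ℂ) • v) = t * t * (star v ⬝ᵥ B.mulVec v) := by
    intro t v B
    simp [star_smul, mulVec_smul, smul_dotProduct, dotProduct_smul]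
    ring
  obtain ⟨w, hw0, hw⟩ := exists_isotropic (A - p • 1) (((√a : ℝ) : ℂ) • x) (((√b : ℝ) : ℂ) • y)
    (a * (z1 - p))
    (smul_ne_zero (by simpa using (Real.sqrt_pos.2 ha).ne') hx0)
    (by rw [hsc, hsa, key, hx, mul_one])
    (by rw [hsc, hsb, key, hy, mul_one, ← hz2]
        linear_combination (-p) * hab' - hp')
  obtain ⟨r, hr, h1⟩ := exists_normalize hw0
  refine ⟨(r : ℂ) • w, h1, ?_⟩
  have h2 : star ((r : ℂ) • w) ⬝ᵥ (A - p • 1).mulVec ((r : ℂ) • w) = 0 := by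
    rw [hsc, hw, mul_zero]
  rw [key, h1, mul_one] at h2
  exact sub_eq_zero.1 h2

lemma numRange_compact (A : Matrix (Fin n) (Fin n) ℂ) : IsCompact (numRange A) := by
  apply IsCompact.image
  · apply Metric.isCompact_of_isClosed_isBounded
    · apply isClosed_eq _ continuous_const
      unfold dotProduct
      fun_prop
    · refine (Metric.isBounded_closedBall (x := (0 : Fin n → ℂ)) (r := 1)).subset ?_
      intro x hx
      rw [mem_closedBall_zero_iff, pi_norm_le_iff_of_nonneg zero_le_one]
      intro i
      have h1 : ∑ j, ‖x j‖ ^ 2 = 1 := by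
        have : ((∑ j, ‖x j‖ ^ 2 : ℝ) : ℂ) = 1 := by
          rw [← (show star x ⬝ᵥ x = 1 from hx)]
          simp [dotProduct, Complex.conj_mul']
        exact_mod_cast this
      have h2 : ‖x i‖ ^ 2 ≤ ∑ j, ‖x j‖ ^ 2 :=
        Finset.single_le_sum (f := fun j => ‖x j‖ ^ 2) (fun j _ => by positivity)
          (Finset.mem_univ i)
      nlinarith [norm_nonneg (x i)]
  · unfold dotProduct mulVec dotProduct
    fun_prop

/-- A sectorial matrix can be rotated to be strictly accretive. -/
lemma exists_rotation (A : Matrix (Fin n) (Fin n) ℂ) (hA : IsSectorial A) :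
    ∃ c : ℂ, c ≠ 0 ∧ ∀ x : Fin n → ℂ, x ≠ 0 → 0 < (c * (star x ⬝ᵥ A.mulVec x)).re := by
  by_cases hn : n = 0
  · subst hn
    exact ⟨1, one_ne_zero, fun x hx => absurd (Subsingleton.elim x 0) hx⟩
  have h0 : (0 : ℂ) ∉ numRange A := by
    rintro ⟨x, hx, h⟩
    exact hA x hx h
  obtain ⟨f, u, hu, hf⟩ := geometric_hahn_banach_point_closed (numRange_convex A)
    (numRange_compact A).isClosed h0
  have hfz : ∀ z : ℂ, f z = (((f 1 : ℂ) - f Complex.I * Complex.I) * z).re := by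
    intro z
    have : z = z.re • (1 : ℂ) + z.im • Complex.I := by
      simp [Complex.re_add_im]
    conv_lhs => rw [this, map_add, map_smul, map_smul]
    simp
    ring
  have hpos : ∀ x : Fin n → ℂ, x ≠ 0 →
      0 < ((((f 1 : ℂ) - f Complex.I * Complex.I)) * (star x ⬝ᵥ A.mulVec x)).re := by
    intro x hx
    obtain ⟨r, hr, h1⟩ := exists_normalize hx
    have h2 := hf _ ⟨_, h1, rfl⟩
    have h3 : star ((r : ℂ) • x) ⬝ᵥ A.mulVec ((r : ℂ) • x)
        = (r * r) • (star x ⬝ᵥ A.mulVec x) := by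
      simp [star_smul, mulVec_smul, smul_dotProduct, dotProduct_smul]
      ring
    simp only [h3, map_smul, map_zero] at h2 hu
    rw [← hfz]
    have h4 : 0 < (r * r) * f (star x ⬝ᵥ A.mulVec x) := hu.trans h2
    exact (pos_iff_pos_of_mul_pos h4).1 (by positivity)
  refine ⟨_, ?_, hpos⟩
  intro hc
  have := hpos (fun _ => 1) (fun h => by
    have := congrFun h ⟨0, Nat.pos_of_ne_zero hn⟩
    simp at this)
  rw [hc] at this
  simp at this

lemma posDef_factor {H : Matrix (Fin n) (Fin n) ℂ} (hH : H.PosDef) :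
    ∃ S : Matrix (Fin n) (Fin n) ℂ, IsUnit S ∧ H = Sᴴ * S := by
  have hsp := hH.1.spectral_theorem
  rw [Unitary.conjStarAlgAut_apply] at hsp
  set U := hH.1.eigenvectorUnitary
  refine ⟨diagonal (fun i => ((√(hH.1.eigenvalues i) : ℝ) : ℂ)) * star (U : Matrix _ _ ℂ), ?_, ?_⟩
  · apply IsUnit.mul
    · rw [isUnit_diagonal, Pi.isUnit_iff]
      intro i
      simpa using (Real.sqrt_pos.2 (hH.eigenvalues_pos i)).ne'
    · exact (Unitary.toUnits (star U)).isUnit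
  · conv_lhs => rw [hsp]
    rw [conjTranspose_mul, diagonal_conjTranspose, star_eq_conjTranspose,
      conjTranspose_conjTranspose]
    have : diagonal (RCLike.ofReal ∘ hH.1.eigenvalues : Fin n → ℂ)
        = diagonal (star fun i => ((√(hH.1.eigenvalues i) : ℝ) : ℂ))
          * diagonal (fun i => ((√(hH.1.eigenvalues i) : ℝ) : ℂ)) := by
      rw [diagonal_mul_diagonal]
      congr 1
      ext i
      simp only [Function.comp, Pi.star_apply, Complex.star_def, Complex.conj_ofReal]
      rw [← Complex.ofReal_mul, Real.mul_self_sqrt (hH.eigenvalues_pos i).le]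
      rfl
    rw [this]
    simp only [Matrix.mul_assoc]

/-- Unsorted, unnormalized sectorial decomposition. -/
lemma exists_decomp (A : Matrix (Fin n) (Fin n) ℂ) (hA : IsSectorial A) :
    ∃ T φ, IsSectorialDecomp A T φ ∧ ∀ i j, φ i - φ j < Real.pi := by
  obtain ⟨c, hc, hpos⟩ := exists_rotation A hA
  set B := c • A with hB
  set H := (1 / 2 : ℂ) • (B + Bᴴ) with hH
  set K := (-Complex.I / 2) • (B - Bᴴ) with hK
  have hHK : B = H + Complex.I • K := by
    rw [hH, hK, smul_smul]
    have : Complex.I * (-Complex.I / 2) = 1 / 2 := by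
      linear_combination (-1 / 2 : ℂ) * Complex.I_mul_I
    rw [this, ← smul_add]
    ext i j
    simp
    ring
  have hKh : K.IsHermitian := by
    unfold Matrix.IsHermitian
    ext i j
    simp [hK]
    ring
  have hHh : H.IsHermitian := by
    unfold Matrix.IsHermitian
    ext i j
    simp [hH]
    ring
  have hHp : H.PosDef := by
    refine PosDef.of_dotProduct_mulVec_pos hHh ?_
    intro x hx
    have h1 : star x ⬝ᵥ Bᴴ.mulVec x = star (star x ⬝ᵥ B.mulVec x) := by
      rw [star_dotProduct, star_mulVec, dotProduct_mulVec, conjTranspose_conjTranspose]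
    have h2 : star x ⬝ᵥ H.mulVec x = (((star x ⬝ᵥ B.mulVec x).re : ℝ) : ℂ) := by
      rw [hH, smul_mulVec, add_mulVec, dotProduct_smul, dotProduct_add, h1, smul_eq_mul,
        Complex.re_eq_add_conj, Complex.star_def]
      ring
    rw [h2]
    have h3 := hpos x hx
    have h4 : star x ⬝ᵥ B.mulVec x = c * (star x ⬝ᵥ A.mulVec x) := by
      rw [hB, smul_mulVec, dotProduct_smul, smul_eq_mul]
    rw [h4]
    exact_mod_cast h3
  obtain ⟨S, hS, hHS⟩ := posDef_factor hHp
  have hSd : IsUnit S.det := (isUnit_iff_isUnit_det S).1 hS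
  have hK' : ((S⁻¹)ᴴ * K * S⁻¹).IsHermitian := isHermitian_conjTranspose_mul_mul _ hKh
  have hsp := hK'.spectral_theorem
  rw [Unitary.conjStarAlgAut_apply] at hsp
  set U := hK'.eigenvectorUnitary with hU
  set l := hK'.eigenvalues with hl
  set V : Matrix (Fin n) (Fin n) ℂ := star (U : Matrix (Fin n) (Fin n) ℂ) * S with hV
  have hVu : IsUnit V := ((Unitary.toUnits (star U)).isUnit).mul hS
  have hVV : Vᴴ * V = Sᴴ * S := by
    rw [hV, conjTranspose_mul, star_eq_conjTranspose, conjTranspose_conjTranspose,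
      Matrix.mul_assoc, ← Matrix.mul_assoc (U : Matrix (Fin n) (Fin n) ℂ),
      ← star_eq_conjTranspose (U : Matrix (Fin n) (Fin n) ℂ), Unitary.mul_star_self_of_mem U.2,
      Matrix.one_mul]
  have hSS : Sᴴ * (S⁻¹)ᴴ = 1 := by
    rw [← conjTranspose_mul, nonsing_inv_mul S hSd, conjTranspose_one]
  have hKV : K = Vᴴ * diagonal (fun i => (l i : ℂ)) * V := by
    have h1 : K = Sᴴ * ((S⁻¹)ᴴ * K * S⁻¹) * S := by
      calc K = (Sᴴ * (S⁻¹)ᴴ) * K * (S⁻¹ * S) := by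
            rw [hSS, nonsing_inv_mul S hSd, Matrix.one_mul, Matrix.mul_one]
        _ = _ := by simp only [Matrix.mul_assoc]
    rw [h1, hsp, hV, conjTranspose_mul, star_eq_conjTranspose, conjTranspose_conjTranspose]
    simp only [Matrix.mul_assoc]
    rfl
  have hBV : B = Vᴴ * diagonal (fun i => 1 + Complex.I * (l i : ℂ)) * V := by
    have : diagonal (fun i => 1 + Complex.I * (l i : ℂ))
        = (1 : Matrix (Fin n) (Fin n) ℂ) + Complex.I • diagonal (fun i => (l i : ℂ)) := by
      rw [← diagonal_one, ← diagonal_smul, diagonal_add]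
      rfl
    rw [this, Matrix.mul_add, Matrix.add_mul, Matrix.mul_one, hVV, ← hHS, Matrix.mul_smul,
      Matrix.smul_mul, ← hKV, ← hHK]
  set ρ : Fin n → ℝ := fun i => ‖c⁻¹‖ * ‖1 + Complex.I * (l i : ℂ)‖ with hρ
  have hne : ∀ i, 1 + Complex.I * (l i : ℂ) ≠ 0 := by
    intro i h
    have := congrArg Complex.re h
    simp at this
  have hρp : ∀ i, 0 < ρ i := fun i =>
    mul_pos (norm_pos_iff.2 (inv_ne_zero hc)) (norm_pos_iff.2 (hne i))
  set φ : Fin n → ℝ := fun i => Complex.arg c⁻¹ + Complex.arg (1 + Complex.I * (l i : ℂ)) with hφ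
  set R : Fin n → ℂ := fun i => ((√(ρ i) : ℝ) : ℂ) with hR
  refine ⟨diagonal R * V, φ, ⟨?_, ?_⟩, ?_⟩
  · refine IsUnit.mul ?_ hVu
    rw [isUnit_diagonal, Pi.isUnit_iff]
    intro i
    simpa [hR] using (Real.sqrt_pos.2 (hρp i)).ne'
  · have hAB : A = c⁻¹ • B := by rw [hB, smul_smul, inv_mul_cancel₀ hc, one_smul]
    have hd : diagonal (star R) * phaseDiag φ * diagonal R
        = c⁻¹ • diagonal (fun i => 1 + Complex.I * (l i : ℂ)) := by
      rw [phaseDiag, diagonal_mul_diagonal, diagonal_mul_diagonal, ← diagonal_smul]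
      congr 1
      ext i
      have h1 : R i * R i = (ρ i : ℂ) := by
        simp only [hR]
        rw [← Complex.ofReal_mul, Real.mul_self_sqrt (hρp i).le]
      have h2 : star (R i) = R i := by simp [hR]
      have h3 : Complex.exp (Complex.I * (φ i : ℂ)) = Complex.exp (Complex.arg c⁻¹ * Complex.I)
          * Complex.exp (Complex.arg (1 + Complex.I * (l i : ℂ)) * Complex.I) := by
        rw [← Complex.exp_add]
        congr 1
        simp only [hφ]
        push_cast
        ring
      have h4 := Complex.norm_mul_exp_arg_mul_I c⁻¹
      have h5 := Complex.norm_mul_exp_arg_mul_I (1 + Complex.I * (l i : ℂ))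
      simp only [Pi.star_apply, Pi.smul_apply, smul_eq_mul]
      rw [h2, h3, mul_right_comm, h1]
      conv_rhs => rw [← h4, ← h5]
      simp only [hρ]
      push_cast
      ring
    rw [conjTranspose_mul, diagonal_conjTranspose]
    calc A = Vᴴ * (diagonal (star R) * phaseDiag φ * diagonal R) * V := by
          rw [hd, hAB, Matrix.mul_smul, Matrix.smul_mul, ← hBV]
      _ = _ := by simp only [Matrix.mul_assoc]
  · have hb : ∀ i, |Complex.arg (1 + Complex.I * (l i : ℂ))| < Real.pi / 2 := by
      intro i
      rw [Complex.abs_arg_lt_pi_div_two_iff]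
      left
      simp
    intro i j
    have h1 := abs_lt.1 (hb i)
    have h2 := abs_lt.1 (hb j)
    simp only [hφ]
    linarith [h1.2, h2.1]

lemma decomp_perm {A T : Matrix (Fin n) (Fin n) ℂ} {φ : Fin n → ℝ} (h : IsSectorialDecomp A T φ)
    (σ : Equiv.Perm (Fin n)) : IsSectorialDecomp A (T.submatrix σ id) (φ ∘ σ) := by
  obtain ⟨hT, hA⟩ := h
  have hd : phaseDiag (φ ∘ σ) = (phaseDiag φ).submatrix σ σ := by
    unfold phaseDiag
    rw [submatrix_diagonal_equiv]
    rfl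
  constructor
  · exact (isUnit_submatrix_equiv (e₁ := σ) (e₂ := Equiv.refl _)).2 hT
  · rw [hd, conjTranspose_submatrix, submatrix_mul_equiv, submatrix_mul_equiv, ← hA]
    simp

lemma decomp_shift {A T : Matrix (Fin n) (Fin n) ℂ} {φ : Fin n → ℝ} (h : IsSectorialDecomp A T φ)
    (k : ℤ) : IsSectorialDecomp A T (fun i => φ i + k * (2 * Real.pi)) := by
  obtain ⟨hT, hA⟩ := h
  refine ⟨hT, ?_⟩
  have : phaseDiag (fun i => φ i + k * (2 * Real.pi)) = phaseDiag φ := by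
    unfold phaseDiag
    congr 1
    ext i
    rw [Complex.exp_eq_exp_iff_exists_int]
    exact ⟨k, by push_cast; ring⟩
  rw [this]
  exact hA

lemma exists_canonical (A : Matrix (Fin n) (Fin n) ℂ) (hA : IsSectorial A) :
    ∃ φ, IsCanonicalPhases A φ := by
  obtain ⟨T, φ, hd, hlt⟩ := exists_decomp A hA
  by_cases hn : n = 0
  · subst hn
    refine ⟨φ, fun i => i.elim0, hlt, ?_, ?_, T, hd⟩
    · simp [Real.iSup_of_isEmpty, Real.iInf_of_isEmpty, Real.pi_pos]
    · simp [Real.iSup_of_isEmpty, Real.iInf_of_isEmpty, Real.pi_pos.le]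
  have : Nonempty (Fin n) := ⟨⟨0, Nat.pos_of_ne_zero hn⟩⟩
  set σ := Tuple.sort (fun i => -φ i) with hσ
  have hmono : Monotone ((fun i => -φ i) ∘ σ) := Tuple.monotone_sort _
  set ψ := φ ∘ σ with hψ
  have hanti : Antitone ψ := fun i j hij => by
    have := hmono hij
    simpa [hψ] using this
  have hdψ := decomp_perm hd σ
  obtain ⟨k, hk, -⟩ := existsUnique_add_zsmul_mem_Ioc Real.two_pi_pos
    (((⨆ i, ψ i) + ⨅ i, ψ i) / 2) (-Real.pi)
  rw [zsmul_eq_mul] at hk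
  have hsup : (⨆ i, (ψ i + k * (2 * Real.pi))) = (⨆ i, ψ i) + k * (2 * Real.pi) :=
    ((OrderIso.addRight ((k : ℝ) * (2 * Real.pi))).map_ciSup
      (Set.finite_range ψ).bddAbove).symm
  have hinf : (⨅ i, (ψ i + k * (2 * Real.pi))) = (⨅ i, ψ i) + k * (2 * Real.pi) :=
    ((OrderIso.addRight ((k : ℝ) * (2 * Real.pi))).map_ciInf
      (Set.finite_range ψ).bddBelow).symm
  refine ⟨fun i => ψ i + k * (2 * Real.pi), fun i j hij => ?_, fun i j => ?_, ?_, ?_, _,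
    decomp_shift hdψ k⟩
  · have := hanti hij
    simpa using this
  · have := hlt (σ i) (σ j)
    simpa [hψ] using this
  · rw [hsup, hinf]
    linarith [hk.1]
  · rw [hsup, hinf]
    linarith [hk.2]

lemma phases_spec (A : Matrix (Fin n) (Fin n) ℂ) (hA : IsSectorial A) :
    IsCanonicalPhases A (phases A) := by
  have h := exists_canonical A hA
  unfold phases
  rw [dif_pos h]
  exact h.choose_spec

lemma rank_congr_unit (T X : Matrix (Fin n) (Fin n) ℂ) (hT : IsUnit T) :
    (Tᴴ * X * T).rank = X.rank := by
  have h1 : IsUnit T.det := (isUnit_iff_isUnit_det T).1 hT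
  have h2 : IsUnit Tᴴ.det := by rw [det_conjTranspose]; exact h1.star
  rw [rank_mul_eq_left_of_isUnit_det _ _ h1, rank_mul_eq_right_of_isUnit_det _ _ h2]

lemma posDef_of_unit (T : Matrix (Fin n) (Fin n) ℂ) (hT : IsUnit T) : (Tᴴ * T).PosDef :=
  PosDef.conjTranspose_mul_self T (mulVec_injective_of_isUnit hT)

/-- `prank A ≥ min rank (A - M)` over `M ≻ 0`, and this min equals
`min rank (TᴴAT - I)` over invertible `T`. -/
theorem prank_ge_min_rank_sub_posDef
    (A : Matrix (Fin n) (Fin n) ℂ) (hA : IsSectorial A) :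
    sInf {k : ℕ | ∃ M : Matrix (Fin n) (Fin n) ℂ, M.PosDef ∧ (A - M).rank = k} ≤ prank A ∧
    sInf {k : ℕ | ∃ M : Matrix (Fin n) (Fin n) ℂ, M.PosDef ∧ (A - M).rank = k} =
      sInf {k : ℕ | ∃ T : Matrix (Fin n) (Fin n) ℂ, IsUnit T ∧ (Tᴴ * A * T - 1).rank = k} := by
  constructor
  · obtain ⟨-, -, -, -, T, hT, hAT⟩ := phases_spec A hA
    refine le_trans (Nat.sInf_le (m := (A - Tᴴ * T).rank) ⟨Tᴴ * T, posDef_of_unit T hT, rfl⟩) ?_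
    have h1 : A - Tᴴ * T = Tᴴ * (phaseDiag (phases A) - 1) * T := by
      rw [Matrix.mul_sub, Matrix.sub_mul, Matrix.mul_one, ← hAT]
    rw [h1, rank_congr_unit T _ hT, phaseDiag, ← diagonal_one, diagonal_sub, rank_diagonal, prank,
      ← Nat.card_eq_fintype_card]
    change Set.ncard {i | _} ≤ _
    refine Set.ncard_le_ncard ?_ (Set.toFinite _)
    intro i hi h0
    apply hi
    simp [h0]
  · congr 1
    ext k
    constructor
    · rintro ⟨M, hM, rfl⟩
      obtain ⟨S, hS, rfl⟩ := posDef_factor hM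
      have hSd : IsUnit S.det := (isUnit_iff_isUnit_det S).1 hS
      refine ⟨S⁻¹, (isUnit_nonsing_inv_iff).2 hS, ?_⟩
      rw [← rank_congr_unit S _ hS]
      congr 1
      have hSS : Sᴴ * (S⁻¹)ᴴ = 1 := by
        rw [← conjTranspose_mul, nonsing_inv_mul S hSd, conjTranspose_one]
      calc Sᴴ * ((S⁻¹)ᴴ * A * S⁻¹ - 1) * S
          = (Sᴴ * (S⁻¹)ᴴ) * A * (S⁻¹ * S) - Sᴴ * S := by
            simp only [Matrix.mul_sub, Matrix.sub_mul, Matrix.mul_one, Matrix.mul_assoc]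
        _ = A - Sᴴ * S := by
            rw [hSS, nonsing_inv_mul S hSd, Matrix.one_mul, Matrix.mul_one]
    · rintro ⟨T, hT, rfl⟩
      have hTd : IsUnit T.det := (isUnit_iff_isUnit_det T).1 hT
      have hTi : IsUnit T⁻¹ := (isUnit_nonsing_inv_iff).2 hT
      refine ⟨(T⁻¹)ᴴ * T⁻¹, posDef_of_unit _ hTi, ?_⟩
      rw [← rank_congr_unit T _ hT]
      congr 1
      have hTT : Tᴴ * (T⁻¹)ᴴ = 1 := by
        rw [← conjTranspose_mul, nonsing_inv_mul T hTd, conjTranspose_one]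
      calc Tᴴ * (A - (T⁻¹)ᴴ * T⁻¹) * T
          = Tᴴ * A * T - (Tᴴ * (T⁻¹)ᴴ) * (T⁻¹ * T) := by
            simp only [Matrix.mul_sub, Matrix.sub_mul, Matrix.mul_assoc]
        _ = Tᴴ * A * T - 1 := by
            rw [hTT, nonsing_inv_mul T hTd, Matrix.one_mul]

end LowPrank
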